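/- arXiv:1312.2568 — 2 statements merged into one kernel-verified Lean document; each statement's English description precedes it below -/
import Mathlib

section
/- Let d ≥ 1, a_c = (d−2)/2, and let a, b, p satisfy b = a − a_c + d/p with p ∈ [2, 2d/(d−2)] if d ≥ 3, p ∈ [2,∞) if d = 1 or 2, and the restrictions a < a_c and a ≤ b ≤ a+1 if d ≥ 3, a < b ≤ a+1 if d = 2, a + 1/2 < b ≤ a+1 if d = 1. Then there exists a positive constant C such that ( ∫_{ℝ^d} |u|^p |x|^{−bp} dx )^{2/p} ≤ C ∫_{ℝ^d} |∇u|² |x|^{−2a} dx for every smooth function u with compact support in ℝ^d \ {0}. -/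
open MeasureTheory Real
open scoped RealInnerProductSpace

noncomputable section

/-- A smooth function with compact support contained in `ℝ^d \ {0}`. -/
def TestAwayFromZero (d : ℕ) (u : EuclideanSpace ℝ (Fin d) → ℝ) : Prop :=
  ContDiff ℝ (⊤ : ℕ∞) u ∧ HasCompactSupport u ∧ (0 : EuclideanSpace ℝ (Fin d)) ∉ tsupport u

/-- The admissibility conditions on the parameters `(a, b, p)` of the
Caffarelli-Kohn-Nirenberg inequality, with `a_c = (d−2)/2` and `b = a − a_c + d/p`. -/
def CKNAdmissible (d : ℕ) (a b p : ℝ) : Prop :=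
  b = a - ((d : ℝ) - 2) / 2 + (d : ℝ) / p ∧
  2 ≤ p ∧ (3 ≤ d → p ≤ 2 * (d : ℝ) / ((d : ℝ) - 2)) ∧
  a < ((d : ℝ) - 2) / 2 ∧
  (3 ≤ d → a ≤ b ∧ b ≤ a + 1) ∧
  (d = 2 → a < b ∧ b ≤ a + 1) ∧
  (d = 1 → a + 1 / 2 < b ∧ b ≤ a + 1)

/-- The Laplacian `Δu = ∑ ∂²u/∂x_i²`. -/
def lap (d : ℕ) (u : EuclideanSpace ℝ (Fin d) → ℝ) (x : EuclideanSpace ℝ (Fin d)) : ℝ :=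
  ∑ i : Fin d, iteratedFDeriv ℝ 2 u x ![EuclideanSpace.single i 1, EuclideanSpace.single i 1]

/-- `L_a u = −Δu + 2a (x/|x|²)·∇u`, the self-adjoint operator on
`L²(ℝ^d, |x|^{−2a} dx)` associated with `∫ |∇u|² |x|^{−2a} dx`. -/
def opLa (d : ℕ) (a : ℝ) (u : EuclideanSpace ℝ (Fin d) → ℝ)
    (x : EuclideanSpace ℝ (Fin d)) : ℝ :=
  -(lap d u x) + 2 * a * ⟪x, gradient u x⟫ / ‖x‖ ^ 2

/-!
In logarithmic polar coordinates `E \ {0}` is a cylinder `ℝ × S^(d-1)`, with measure `‖x‖ ^ (-d) dx`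
and gradient length `‖x‖ * ‖∇v‖`. The Emden–Fowler substitution `v = ‖x‖ ^ σ * u` with
`σ = (d - 2) / 2 - a` turns `∫ |u| ^ p * ‖x‖ ^ (-b * p) dx` into the `p`-th power of the `L^p` norm
of `v` on the cylinder. Since radial derivatives have integral zero there, the weighted energy of
`u` becomes `∫ ‖x‖ ^ 2 * ‖∇v‖ ^ 2 + σ ^ 2 * v ^ 2` exactly, which for `σ ≠ 0` controls the full
`H¹` norm of `v`. It remains to embed `H¹` of the cylinder into `L^p`. The exponent `2` is trivial
and the exponents in between follow by interpolation from a larger one: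
* for `d ≥ 3`, the critical exponent, by the Sobolev inequality for `‖x‖ ^ (-(d - 2) / 2) * v`;
* for `d = 2`, every even exponent, by induction, applying the embedding of `W^{1,1}` into `L²` to
  `v ^ (m + 1) / ‖x‖`;
* for `d = 1`, a supremum bound, by the fundamental theorem of calculus for `v ^ 2`.
-/

open Module

section Inequalities

variable {α : Type*} [MeasurableSpace α] {μ : Measure α} {f g : α → ℝ}

lemma integral_rpow_mul_rpow_le (hf : Integrable f μ) (hg : Integrable g μ)
    (hf₀ : ∀ x, 0 ≤ f x) (hg₀ : ∀ x, 0 ≤ g x) {s t : ℝ} (hs : 0 ≤ s) (ht : 0 ≤ t)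
    (hst : s + t = 1) :
    ∫ x, f x ^ s * g x ^ t ∂μ ≤ (∫ x, f x ∂μ) ^ s * (∫ x, g x ∂μ) ^ t := by
  have hfg₀ : ∀ x, 0 ≤ f x ^ s * g x ^ t := fun x =>
    mul_nonneg (rpow_nonneg (hf₀ x) s) (rpow_nonneg (hg₀ x) t)
  have hfg : AEStronglyMeasurable (fun x => f x ^ s * g x ^ t) μ :=
    ((hf.aemeasurable.pow_const s).mul (hg.aemeasurable.pow_const t)).aestronglyMeasurable
  rw [integral_eq_lintegral_of_nonneg_ae (.of_forall hfg₀) hfg,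
    integral_eq_lintegral_of_nonneg_ae (.of_forall hf₀) hf.1,
    integral_eq_lintegral_of_nonneg_ae (.of_forall hg₀) hg.1,
    ENNReal.toReal_rpow, ENNReal.toReal_rpow, ← ENNReal.toReal_mul]
  refine ENNReal.toReal_mono (ENNReal.mul_ne_top
    (ENNReal.rpow_ne_top_of_nonneg hs hf.lintegral_lt_top.ne)
    (ENNReal.rpow_ne_top_of_nonneg ht hg.lintegral_lt_top.ne)) ?_
  simp_rw [ENNReal.ofReal_mul (rpow_nonneg (hf₀ _) s),
    ← ENNReal.ofReal_rpow_of_nonneg (hf₀ _) hs, ← ENNReal.ofReal_rpow_of_nonneg (hg₀ _) ht]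
  exact ENNReal.lintegral_mul_norm_pow_le hf.aemeasurable.ennreal_ofReal
    hg.aemeasurable.ennreal_ofReal hs ht hst

lemma sq_integral_mul_le (hf : Integrable (fun x => f x ^ 2) μ)
    (hg : Integrable (fun x => g x ^ 2) μ) (hf₀ : ∀ x, 0 ≤ f x) (hg₀ : ∀ x, 0 ≤ g x) :
    (∫ x, f x * g x ∂μ) ^ 2 ≤ (∫ x, f x ^ 2 ∂μ) * ∫ x, g x ^ 2 ∂μ := by
  have hölder := integral_rpow_mul_rpow_le hf hg (fun x => sq_nonneg _) (fun x => sq_nonneg _)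
    one_half_pos.le one_half_pos.le (add_halves (1 : ℝ))
  simp_rw [← sqrt_eq_rpow, sqrt_sq (hf₀ _), sqrt_sq (hg₀ _)] at hölder
  rw [← sqrt_mul (integral_nonneg fun x => sq_nonneg _)] at hölder
  exact (le_sqrt (integral_nonneg fun x => mul_nonneg (hf₀ x) (hg₀ x)) (by positivity)).1 hölder

end Inequalities

section Calculus

variable {E F : Type*} [NormedAddCommGroup E] [NormedAddCommGroup F] [NormedSpace ℝ F]

lemma integral_fderiv_apply_self [NormedSpace ℝ E] [FiniteDimensional ℝ E] [MeasurableSpace E]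
    [BorelSpace E] {μ : Measure E} [μ.IsAddHaarMeasure] {f : E → F} (hf : ContDiff ℝ 1 f)
    (hf' : HasCompactSupport f) :
    ∫ x, fderiv ℝ f x x ∂μ = -((finrank ℝ E : ℝ) • ∫ x, f x ∂μ) := by
  let b := finBasis ℝ E
  let coord (i) : E →L[ℝ] ℝ := (b.coord i).toContinuousLinearMap
  have hDf : Continuous (fderiv ℝ f) := hf.continuous_fderiv one_ne_zero
  have expand (x : E) : fderiv ℝ f x x = ∑ i, coord i x • fderiv ℝ f x (b i) := by
    generalize fderiv ℝ f x = L
    conv_lhs => rw [← b.sum_repr x]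
    simp only [map_sum, map_smul, coord, LinearMap.coe_toContinuousLinearMap', Basis.coord_apply]
  have integrable_term (i) : Integrable (fun x => coord i x • fderiv ℝ f x (b i)) μ :=
    ((coord i).continuous.smul (hDf.clm_apply continuous_const)).integrable_of_hasCompactSupport
      (hf'.fderiv_apply ℝ _).smul_left
  have by_parts (i) : ∫ x, coord i x • fderiv ℝ f x (b i) ∂μ = -∫ x, f x ∂μ := by
    have coord_self : coord i (b i) = 1 := by simp [coord]
    have := integral_smul_fderiv_eq_neg_fderiv_smul_of_integrable (μ := μ) (f := coord i) (g := f)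
      (v := b i)
      (by simpa [coord_self] using hf.continuous.integrable_of_hasCompactSupport hf')
      (integrable_term i)
      (((coord i).continuous.smul hf.continuous).integrable_of_hasCompactSupport hf'.smul_left)
      (fun x _ => (coord i).differentiableAt) (fun x _ => hf.differentiable one_ne_zero x)
    simpa only [ContinuousLinearMap.fderiv, coord_self, one_smul] using this
  simp_rw [expand]
  rw [integral_finsetSum _ fun i _ => integrable_term i]
  simp [by_parts, Nat.cast_smul_eq_nsmul]

lemma exists_integral_norm_rpow_le_sobolev [NormedSpace ℝ E] [FiniteDimensional ℝ E]
    [FiniteDimensional ℝ F] [MeasurableSpace E] [BorelSpace E] (μ : Measure E)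
    [μ.IsAddHaarMeasure] {p q : ℝ} (hp : 1 ≤ p) (hq : 0 < q) (hd : 0 < finrank ℝ E)
    (hpq : q⁻¹ = p⁻¹ - (finrank ℝ E : ℝ)⁻¹) :
    ∃ S : ℝ, 0 ≤ S ∧ ∀ f : E → F, ContDiff ℝ 1 f → HasCompactSupport f →
      ∫ x, ‖f x‖ ^ q ∂μ ≤ S * (∫ x, ‖fderiv ℝ f x‖ ^ p ∂μ) ^ (q / p) := by
  lift p to NNReal using zero_le_one.trans hp
  lift q to NNReal using hq.le
  have hp₀ : (p : ENNReal) ≠ 0 := by exact_mod_cast (zero_lt_one.trans_le hp).ne'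
  refine ⟨(SNormLESNormFDerivOfEqConst F μ p : ℝ) ^ (q : ℝ),
    rpow_nonneg (NNReal.coe_nonneg _) _, fun f hf hf' => ?_⟩
  have memLp_f : MemLp f q μ := hf.continuous.memLp_of_hasCompactSupport hf'
  have memLp_fderiv : MemLp (fderiv ℝ f) p μ :=
    (hf.continuous_fderiv one_ne_zero).memLp_of_hasCompactSupport (hf'.fderiv (𝕜 := ℝ))
  have sobolev := eLpNorm_le_eLpNorm_fderiv_of_eq μ hf hf' (mod_cast hp) hd hpq
  rw [memLp_f.eLpNorm_eq_integral_rpow_norm (mod_cast hq.ne') ENNReal.coe_ne_top,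
    memLp_fderiv.eLpNorm_eq_integral_rpow_norm hp₀ ENNReal.coe_ne_top,
    ← ENNReal.ofReal_coe_nnreal (p := SNormLESNormFDerivOfEqConst F μ p),
    ← ENNReal.ofReal_mul (NNReal.coe_nonneg _), ENNReal.ofReal_le_ofReal_iff (by positivity),
    rpow_inv_le_iff_of_pos (by positivity) (by positivity) (by simpa using hq),
    mul_rpow (by positivity) (by positivity), ← rpow_mul (by positivity),
    inv_mul_eq_div] at sobolev
  exact sobolev

lemma norm_le_integral_norm_fderiv_of_finrank_eq_one [InnerProductSpace ℝ E] [MeasurableSpace E]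
    [BorelSpace E] [FiniteDimensional ℝ E] (hd : finrank ℝ E = 1) {f : E → F}
    (hf : ContDiff ℝ 1 f) (hf' : HasCompactSupport f) (x : E) :
    ‖f x‖ ≤ ∫ y, ‖fderiv ℝ f y‖ := by
  let e : ℝ ≃ₗᵢ[ℝ] E :=
    (stdOrthonormalBasis ℝ ℝ).equiv (stdOrthonormalBasis ℝ E) (finCongr (by simp [hd]))
  have norm_deriv_comp_le (t : ℝ) : ‖deriv (f ∘ e) t‖ₑ ≤ ‖fderiv ℝ f (e t)‖ₑ := by
    have chain := (hf.differentiable one_ne_zero (e t)).hasFDerivAt.comp_hasDerivAt t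
      e.toContinuousLinearEquiv.hasFDerivAt.hasDerivAt
    rw [chain.deriv, enorm_le_iff_norm_le]
    exact (ContinuousLinearMap.le_opNorm _ _).trans (by simp)
  have bound : ‖f x‖ₑ ≤ ∫⁻ y, ‖fderiv ℝ f y‖ₑ :=
    calc ‖f x‖ₑ = ‖(f ∘ e) (e.symm x)‖ₑ := by simp
      _ ≤ ∫⁻ t in Set.Iic (e.symm x), ‖deriv (f ∘ e) t‖ₑ :=
        HasCompactSupport.enorm_le_lintegral_Ici_deriv (hf.comp e.contDiff)
          (hf'.comp_homeomorph e.toHomeomorph) _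
      _ ≤ ∫⁻ t, ‖deriv (f ∘ e) t‖ₑ := setLIntegral_le_lintegral _ _
      _ ≤ ∫⁻ t, ‖fderiv ℝ f (e t)‖ₑ := lintegral_mono norm_deriv_comp_le
      _ = ∫⁻ y, ‖fderiv ℝ f y‖ₑ := e.measurePreserving.lintegral_comp_emb
        e.toHomeomorph.measurableEmbedding fun y => ‖fderiv ℝ f y‖ₑ
  have integrable_fderiv : Integrable (fderiv ℝ f) :=
    (hf.continuous_fderiv one_ne_zero).integrable_of_hasCompactSupport (hf'.fderiv (𝕜 := ℝ))
  rwa [← ofReal_integral_norm_eq_lintegral_enorm integrable_fderiv, ← ofReal_norm,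
    ENNReal.ofReal_le_ofReal_iff (integral_nonneg fun _ => norm_nonneg _)] at bound

lemma norm_norm_rpow_smul_rpow (x : E) (y : F) (γ q : ℝ) :
    ‖‖x‖ ^ γ • y‖ ^ q = ‖x‖ ^ (γ * q) * ‖y‖ ^ q := by
  have hx : 0 ≤ ‖x‖ ^ γ := rpow_nonneg (norm_nonneg x) γ
  rw [norm_smul, norm_of_nonneg hx, mul_rpow hx (norm_nonneg y), ← rpow_mul (norm_nonneg x)]

lemma hasFDerivAt_norm_rpow_of_ne_zero [InnerProductSpace ℝ E] (γ : ℝ) {x : E} (hx : x ≠ 0) :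
    HasFDerivAt (fun y : E => ‖y‖ ^ γ) ((γ * ‖x‖ ^ (γ - 2)) • innerSL ℝ x) x := by
  apply HasStrictFDerivAt.hasFDerivAt
  convert! (hasStrictFDerivAt_norm_sq x).rpow_const (p := γ / 2) (by simp [hx]) using 0
  simp_rw [← Real.rpow_natCast_mul (norm_nonneg _), ← Nat.cast_smul_eq_nsmul ℝ, smul_smul]
  ring_nf

lemma fderiv_norm_rpow_smul [InnerProductSpace ℝ E] {f : E → F} {x : E}
    (hf : DifferentiableAt ℝ f x) (hx : x ≠ 0) (γ : ℝ) :
    fderiv ℝ (fun y => ‖y‖ ^ γ • f y) x =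
      ‖x‖ ^ γ • (fderiv ℝ f x + ((γ * (‖x‖ ^ 2)⁻¹) • innerSL ℝ x).smulRight (f x)) := by
  have factor : γ * ‖x‖ ^ (γ - 2) = ‖x‖ ^ γ * (γ * (‖x‖ ^ 2)⁻¹) := by
    rw [rpow_sub (norm_pos_iff.2 hx), rpow_two]
    ring
  rw [((hasFDerivAt_norm_rpow_of_ne_zero γ hx).fun_smul hf.hasFDerivAt).fderiv, factor]
  ext y
  simp [smul_smul, mul_assoc]

lemma fderiv_norm_rpow_smul_apply_self [InnerProductSpace ℝ E] {f : E → F} {x : E}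
    (hf : DifferentiableAt ℝ f x) (hx : x ≠ 0) (γ : ℝ) :
    fderiv ℝ (fun y => ‖y‖ ^ γ • f y) x x = ‖x‖ ^ γ • (fderiv ℝ f x x + γ • f x) := by
  have hx₀ : ‖x‖ ≠ 0 := norm_ne_zero_iff.2 hx
  have radial : γ * (‖x‖ ^ 2)⁻¹ * ‖x‖ ^ 2 = γ := by field_simp
  simp [fderiv_norm_rpow_smul hf hx, radial]

lemma norm_mul_norm_fderiv_norm_rpow_smul_le [InnerProductSpace ℝ E] {f : E → F} {x : E}
    (hf : DifferentiableAt ℝ f x) (hx : x ≠ 0) (γ : ℝ) :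
    ‖x‖ * ‖fderiv ℝ (fun y => ‖y‖ ^ γ • f y) x‖ ≤
      ‖x‖ ^ γ * (‖x‖ * ‖fderiv ℝ f x‖ + |γ| * ‖f x‖) := by
  have hx₀ : ‖x‖ ≠ 0 := norm_ne_zero_iff.2 hx
  rw [fderiv_norm_rpow_smul hf hx, norm_smul, norm_of_nonneg (by positivity), mul_left_comm]
  gcongr
  calc ‖x‖ * ‖fderiv ℝ f x + ((γ * (‖x‖ ^ 2)⁻¹) • innerSL ℝ x).smulRight (f x)‖
      ≤ ‖x‖ * (‖fderiv ℝ f x‖ + ‖((γ * (‖x‖ ^ 2)⁻¹) • innerSL ℝ x).smulRight (f x)‖) := by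
        gcongr
        exact norm_add_le _ _
    _ = ‖x‖ * ‖fderiv ℝ f x‖ + |γ| * ‖f x‖ := by
        simp only [ContinuousLinearMap.norm_smulRight_apply, norm_smul, innerSL_apply_norm,
          norm_mul, norm_inv, norm_pow, norm_norm, norm_eq_abs γ]
        field_simp

lemma norm_add_smul_innerSL_sq [InnerProductSpace ℝ E] [CompleteSpace E] (L : StrongDual ℝ E)
    (c : ℝ) (x : E) : ‖L + c • innerSL ℝ x‖ ^ 2 = ‖L‖ ^ 2 + 2 * c * L x + c ^ 2 * ‖x‖ ^ 2 := by
  obtain ⟨y, rfl⟩ := (InnerProductSpace.toDual ℝ E).surjective L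
  have hx : innerSL ℝ x = InnerProductSpace.toDual ℝ E x := rfl
  rw [hx, ← map_smul, ← map_add]
  simp only [LinearIsometryEquiv.norm_map, InnerProductSpace.toDual_apply_apply]
  rw [norm_add_sq_real, real_inner_smul_right, norm_smul, mul_pow, norm_eq_abs, sq_abs]
  ring

lemma sq_norm_mul_norm_fderiv_norm_rpow_smul [InnerProductSpace ℝ E] [CompleteSpace E]
    {f : E → ℝ} {x : E} (hf : DifferentiableAt ℝ f x) (hx : x ≠ 0) (γ : ℝ) :
    (‖x‖ * ‖fderiv ℝ (fun y => ‖y‖ ^ γ • f y) x‖) ^ 2 = (‖x‖ ^ γ) ^ 2 *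
      ((‖x‖ * ‖fderiv ℝ f x‖) ^ 2 + 2 * γ * f x * fderiv ℝ f x x + (γ * f x) ^ 2) := by
  have hx₀ : ‖x‖ ≠ 0 := norm_ne_zero_iff.2 hx
  have smulRight_eq : ((γ * (‖x‖ ^ 2)⁻¹) • innerSL ℝ x).smulRight (f x) =
      (γ * (‖x‖ ^ 2)⁻¹ * f x) • innerSL ℝ x := by
    ext y
    simp
    ring
  rw [fderiv_norm_rpow_smul hf hx, smulRight_eq, norm_smul, norm_of_nonneg (by positivity),
    mul_left_comm, mul_pow, mul_pow, norm_add_smul_innerSL_sq]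
  field_simp

end Calculus

section PuncturedTest

variable {E F G : Type*} [NormedAddCommGroup E] [NormedAddCommGroup F] [NormedSpace ℝ F]
  [NormedAddCommGroup G] [NormedSpace ℝ G]

/-- `f` is a `C^n` function with compact support in `E \ {0}`. The case `n = 0` describes the
integrands built from such functions: they may be multiplied by any power of `‖x‖`. -/
structure IsPuncturedTest [NormedSpace ℝ E] (n : WithTop ℕ∞) (f : E → F) : Prop where
  contDiff : ContDiff ℝ n f
  hasCompactSupport : HasCompactSupport f
  zero_notMem_tsupport : (0 : E) ∉ tsupport f

namespace IsPuncturedTest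

section NormedSpace

variable [NormedSpace ℝ E] {n : WithTop ℕ∞} {f : E → F} {g : E → G}

lemma apply_zero (hf : IsPuncturedTest n f) : f 0 = 0 :=
  image_eq_zero_of_notMem_tsupport hf.zero_notMem_tsupport

lemma of_contDiffOn (hf : IsPuncturedTest n f) {m : WithTop ℕ∞}
    (hg : ContDiffOn ℝ m g {0}ᶜ) (hfg : ∀ x, f x = 0 → g x = 0) : IsPuncturedTest m g := by
  have tsupport_subset : tsupport g ⊆ tsupport f :=
    closure_mono fun x hgx hfx => hgx (hfg x hfx)
  have zero_notMem : (0 : E) ∉ tsupport g := fun h => hf.zero_notMem_tsupport (tsupport_subset h)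
  refine ⟨contDiff_iff_contDiffAt.2 fun x => ?_, hf.hasCompactSupport.mono' ?_, zero_notMem⟩
  · rcases eq_or_ne x 0 with rfl | hx
    · exact contDiffAt_const.congr_of_eventuallyEq (notMem_tsupport_iff_eventuallyEq.1 zero_notMem)
    · exact hg.contDiffAt (isOpen_compl_singleton.mem_nhds hx)
  · exact (subset_tsupport g).trans tsupport_subset

lemma of_le (hf : IsPuncturedTest n f) {m : WithTop ℕ∞} (hmn : m ≤ n) : IsPuncturedTest m f :=
  ⟨hf.contDiff.of_le hmn, hf.hasCompactSupport, hf.zero_notMem_tsupport⟩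

lemma comp_contDiff (hf : IsPuncturedTest n f) {φ : F → G} (hφ : ContDiff ℝ n φ)
    (hφ₀ : φ 0 = 0) : IsPuncturedTest n fun x => φ (f x) :=
  hf.of_contDiffOn (hφ.comp hf.contDiff).contDiffOn fun x hx => by rw [hx, hφ₀]

lemma comp_continuous (hf : IsPuncturedTest n f) {φ : F → G} (hφ : Continuous φ)
    (hφ₀ : φ 0 = 0) : IsPuncturedTest 0 fun x => φ (f x) :=
  (hf.of_le zero_le).comp_contDiff (contDiff_zero.2 hφ) hφ₀

protected lemma add {f' : E → F} (hf : IsPuncturedTest n f) (hf' : IsPuncturedTest n f') :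
    IsPuncturedTest n fun x => f x + f' x where
  contDiff := hf.contDiff.add hf'.contDiff
  hasCompactSupport := hf.hasCompactSupport.add hf'.hasCompactSupport
  zero_notMem_tsupport h := (tsupport_add f f' h).elim hf.zero_notMem_tsupport
    hf'.zero_notMem_tsupport

lemma continuous_smul (hf : IsPuncturedTest n f) {φ : E → ℝ} (hφ : Continuous φ) :
    IsPuncturedTest 0 fun x => φ x • f x :=
  hf.of_contDiffOn (contDiff_zero.2 (hφ.smul hf.contDiff.continuous)).contDiffOn
    fun x hx => by rw [hx, smul_zero]

protected lemma fderiv (hf : IsPuncturedTest 1 f) : IsPuncturedTest 0 (fderiv ℝ f) where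
  contDiff := contDiff_zero.2 (hf.contDiff.continuous_fderiv one_ne_zero)
  hasCompactSupport := hf.hasCompactSupport.fderiv (𝕜 := ℝ)
  zero_notMem_tsupport h := hf.zero_notMem_tsupport (tsupport_fderiv_subset ℝ h)

lemma fderiv_apply_self (hf : IsPuncturedTest 1 f) :
    IsPuncturedTest 0 fun x => fderiv ℝ f x x :=
  hf.fderiv.of_contDiffOn (contDiff_zero.2
    (hf.fderiv.contDiff.continuous.clm_apply continuous_id)).contDiffOn
    fun x hx => by rw [hx, zero_apply]

lemma abs_rpow {f : E → ℝ} (hf : IsPuncturedTest n f) {q : ℝ} (hq : 0 < q) :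
    IsPuncturedTest 0 fun x => |f x| ^ q :=
  hf.comp_continuous (φ := fun t => |t| ^ q) (continuous_abs.rpow_const fun _ => .inr hq.le)
    (by simp [hq.ne'])

protected lemma pow {f : E → ℝ} (hf : IsPuncturedTest n f) {m : ℕ} (hm : m ≠ 0) :
    IsPuncturedTest n fun x => f x ^ m :=
  hf.comp_contDiff (φ := fun t => t ^ m) (contDiff_id.pow m) (by simp [hm])

lemma norm_mul_norm_fderiv (hf : IsPuncturedTest 1 f) :
    IsPuncturedTest 0 fun x => ‖x‖ * ‖fderiv ℝ f x‖ :=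
  (hf.fderiv.comp_continuous continuous_norm norm_zero).continuous_smul continuous_norm

lemma le_of_forall_ne_zero {f g : E → ℝ} {m : WithTop ℕ∞} (hf : IsPuncturedTest n f)
    (hg : IsPuncturedTest m g) (hfg : ∀ x, x ≠ 0 → f x ≤ g x) (x : E) : f x ≤ g x := by
  rcases eq_or_ne x 0 with rfl | hx
  · rw [hf.apply_zero, hg.apply_zero]
  · exact hfg x hx

lemma ext_of_forall_ne_zero {g : E → F} {m : WithTop ℕ∞} (hf : IsPuncturedTest n f)
    (hg : IsPuncturedTest m g) (hfg : ∀ x, x ≠ 0 → f x = g x) : f = g := by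
  ext x
  rcases eq_or_ne x 0 with rfl | hx
  · rw [hf.apply_zero, hg.apply_zero]
  · exact hfg x hx

lemma integrable [MeasurableSpace E] [OpensMeasurableSpace E] {μ : Measure E}
    [IsFiniteMeasureOnCompacts μ] (hf : IsPuncturedTest n f) : Integrable f μ :=
  hf.contDiff.continuous.integrable_of_hasCompactSupport hf.hasCompactSupport

end NormedSpace

lemma norm_rpow_smul [InnerProductSpace ℝ E] {n : WithTop ℕ∞} {f : E → F}
    (hf : IsPuncturedTest n f) (γ : ℝ) : IsPuncturedTest n fun x => ‖x‖ ^ γ • f x := by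
  have contDiffOn_norm_rpow : ContDiffOn ℝ n (fun x : E => ‖x‖ ^ γ) {0}ᶜ :=
    (contDiffOn_id.norm ℝ fun x hx => hx).rpow_const_of_ne fun x (hx : x ≠ 0) =>
      norm_ne_zero_iff.2 hx
  exact hf.of_contDiffOn (contDiffOn_norm_rpow.smul hf.contDiff.contDiffOn)
    fun x hx => by rw [hx, smul_zero]

end IsPuncturedTest

end PuncturedTest

section Gradients

variable {E : Type*} [NormedAddCommGroup E] [InnerProductSpace ℝ E]

/-- The Emden–Fowler substitution. With `σ = (d - 2) / 2 - a` it turns the weight `‖x‖ ^ (-2 * a)`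
on `‖∇u‖ ^ 2` into the metric of the cylinder. -/
def emdenFowler (σ : ℝ) (u : E → ℝ) (x : E) : ℝ := ‖x‖ ^ σ • u x

protected lemma IsPuncturedTest.emdenFowler {n : WithTop ℕ∞} {u : E → ℝ} (hu : IsPuncturedTest n u)
    (σ : ℝ) : IsPuncturedTest n (emdenFowler σ u) :=
  hu.norm_rpow_smul σ

lemma IsPuncturedTest.sq_norm_fderiv_emdenFowler [CompleteSpace E] {u : E → ℝ}
    (hu : IsPuncturedTest 1 u) (σ : ℝ) {x : E} (hx : x ≠ 0) :
    (‖x‖ * ‖fderiv ℝ (emdenFowler σ u) x‖) ^ 2 + σ ^ 2 * emdenFowler σ u x ^ 2 =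
      (‖x‖ ^ σ * (‖x‖ * ‖fderiv ℝ u x‖)) ^ 2 +
        σ * fderiv ℝ (fun y => emdenFowler σ u y ^ 2) x x := by
  have hu' := hu.contDiff.differentiable one_ne_zero x
  have hv' := (hu.emdenFowler σ).contDiff.differentiable one_ne_zero x
  have radial : fderiv ℝ (emdenFowler σ u) x x = ‖x‖ ^ σ * (fderiv ℝ u x x + σ * u x) :=
    fderiv_norm_rpow_smul_apply_self hu' hx σ
  have fderiv_sq : fderiv ℝ (fun y => emdenFowler σ u y ^ 2) x x =
      2 * (‖x‖ ^ σ * u x) * (‖x‖ ^ σ * (fderiv ℝ u x x + σ * u x)) := by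
    rw [fderiv_fun_pow 2 hv', smul_apply, radial]
    simp [emdenFowler]
  have norm_sq : (‖x‖ * ‖fderiv ℝ (emdenFowler σ u) x‖) ^ 2 = (‖x‖ ^ σ) ^ 2 *
      ((‖x‖ * ‖fderiv ℝ u x‖) ^ 2 + 2 * σ * u x * fderiv ℝ u x x + (σ * u x) ^ 2) :=
    sq_norm_mul_norm_fderiv_norm_rpow_smul hu' hx σ
  rw [fderiv_sq, norm_sq, emdenFowler, smul_eq_mul]
  ring

/-- The combination of `v` and its cylindrical gradient that bounds, up to powers of `‖x‖` and `v`,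
the gradients of the functions `‖x‖ ^ δ * v ^ k`. -/
def gradientMajorant (α β : ℝ) (v : E → ℝ) (x : E) : ℝ :=
  α * (‖x‖ * ‖fderiv ℝ v x‖) + β * |v x|

protected lemma IsPuncturedTest.gradientMajorant {v : E → ℝ} (hv : IsPuncturedTest 1 v)
    (α β : ℝ) : IsPuncturedTest 0 (gradientMajorant α β v) :=
  (hv.norm_mul_norm_fderiv.continuous_smul continuous_const).add
    ((hv.comp_continuous continuous_abs abs_zero).continuous_smul continuous_const)

lemma norm_fderiv_norm_rpow_smul_pow_le {v : E → ℝ} {x : E} (hv : DifferentiableAt ℝ v x)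
    (hx : x ≠ 0) (δ : ℝ) (m : ℕ) :
    ‖fderiv ℝ (fun y => ‖y‖ ^ δ • v y ^ (m + 1)) x‖ ≤
      ‖x‖ ^ (δ - 1) * (|v x| ^ m * gradientMajorant (m + 1) |δ| v x) := by
  have hx₀ : 0 < ‖x‖ := norm_pos_iff.2 hx
  have norm_fderiv_pow : ‖fderiv ℝ (fun y => v y ^ (m + 1)) x‖ =
      (m + 1) * |v x| ^ m * ‖fderiv ℝ v x‖ := by
    rw [fderiv_fun_pow (m + 1) hv, norm_smul, Nat.add_sub_cancel, nsmul_eq_mul, norm_mul, norm_pow,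
      norm_natCast, norm_eq_abs, Nat.cast_succ]
  have bound := norm_mul_norm_fderiv_norm_rpow_smul_le (hv.fun_pow (m + 1)) hx δ
  rw [← mul_le_mul_iff_right₀ hx₀]
  refine bound.trans_eq ?_
  rw [norm_fderiv_pow, gradientMajorant, norm_pow, norm_eq_abs, rpow_sub_one hx₀.ne']
  field_simp
  ring

end Gradients

section Cylinder

variable {E F : Type*} [NormedAddCommGroup E] [InnerProductSpace ℝ E] [FiniteDimensional ℝ E]
  [MeasurableSpace E] [BorelSpace E] [NormedAddCommGroup F] [NormedSpace ℝ F]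

variable (E) in
/-- The measure `‖x‖ ^ (-d) dx`, where `d = dim E`. In logarithmic polar coordinates `x = e^s ω` it
is the product measure `ds dω` of the cylinder `ℝ × S^(d-1)`. -/
def cylinderMeasure : Measure E :=
  volume.withDensity fun x => ENNReal.ofReal (‖x‖ ^ (-(finrank ℝ E : ℝ)))

lemma integral_cylinderMeasure (f : E → F) :
    ∫ x, f x ∂cylinderMeasure E = ∫ x, ‖x‖ ^ (-(finrank ℝ E : ℝ)) • f x := by
  rw [cylinderMeasure, integral_withDensity_eq_integral_toReal_smul (by fun_prop)
    (.of_forall fun _ => ENNReal.ofReal_lt_top)]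
  simp_rw [ENNReal.toReal_ofReal (rpow_nonneg (norm_nonneg _) _)]

lemma IsPuncturedTest.integrable_cylinderMeasure {n : WithTop ℕ∞} {f : E → F}
    (hf : IsPuncturedTest n f) : Integrable f (cylinderMeasure E) := by
  rw [cylinderMeasure, integrable_withDensity_iff_integrable_smul' (by fun_prop)
    (.of_forall fun _ => ENNReal.ofReal_lt_top)]
  simp_rw [ENNReal.toReal_ofReal (rpow_nonneg (norm_nonneg _) _)]
  exact (hf.norm_rpow_smul _).integrable

lemma IsPuncturedTest.integral_cylinderMeasure_fderiv_apply_self {f : E → F}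
    (hf : IsPuncturedTest 1 f) : ∫ x, fderiv ℝ f x x ∂cylinderMeasure E = 0 := by
  set d := (finrank ℝ E : ℝ) with hd
  have hg := hf.norm_rpow_smul (-d)
  have hdg := hg.continuous_smul (continuous_const (y := d))
  have radial : (fun x => fderiv ℝ (fun y => ‖y‖ ^ (-d) • f y) x x + d • ‖x‖ ^ (-d) • f x) =
      fun x => ‖x‖ ^ (-d) • fderiv ℝ f x x := by
    refine (hg.fderiv_apply_self.add hdg).ext_of_forall_ne_zero
      (hf.fderiv_apply_self.norm_rpow_smul _) fun x hx => ?_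
    rw [fderiv_norm_rpow_smul_apply_self (hf.contDiff.differentiable one_ne_zero x) hx, smul_add,
      smul_smul, smul_smul, add_assoc, ← add_smul, add_eq_left]
    convert zero_smul ℝ (f x)
    ring
  rw [integral_cylinderMeasure, ← hd, ← radial,
    integral_add hg.fderiv_apply_self.integrable hdg.integrable,
    integral_fderiv_apply_self hg.contDiff hg.hasCompactSupport, integral_smul, neg_add_cancel]

/-- The squared `H¹` norm of `v` on the cylinder: `‖x‖ * ‖∇v‖` is the length of the gradient of `v`
for the cylindrical metric `|dx|² / ‖x‖²`. -/
def cylinderEnergy (v : E → ℝ) : ℝ :=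
  ∫ x, (‖x‖ * ‖fderiv ℝ v x‖) ^ 2 + v x ^ 2 ∂cylinderMeasure E

lemma cylinderEnergy_nonneg (v : E → ℝ) : 0 ≤ cylinderEnergy v :=
  integral_nonneg fun _ => by positivity

lemma IsPuncturedTest.cylinderEnergy_eq_add {v : E → ℝ} (hv : IsPuncturedTest 1 v) :
    cylinderEnergy v = ∫ x, (‖x‖ * ‖fderiv ℝ v x‖) ^ 2 ∂cylinderMeasure E +
      ∫ x, v x ^ 2 ∂cylinderMeasure E :=
  integral_add (hv.norm_mul_norm_fderiv.pow two_ne_zero).integrable_cylinderMeasure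
    (hv.pow two_ne_zero).integrable_cylinderMeasure

lemma IsPuncturedTest.integral_sq_le_cylinderEnergy {v : E → ℝ} (hv : IsPuncturedTest 1 v) :
    ∫ x, v x ^ 2 ∂cylinderMeasure E ≤ cylinderEnergy v := by
  rw [hv.cylinderEnergy_eq_add]
  exact le_add_of_nonneg_left (integral_nonneg fun x => sq_nonneg _)

theorem IsPuncturedTest.integral_sq_norm_fderiv_emdenFowler {u : E → ℝ} (hu : IsPuncturedTest 1 u)
    (σ : ℝ) :
    ∫ x, (‖x‖ * ‖fderiv ℝ (emdenFowler σ u) x‖) ^ 2 ∂cylinderMeasure E +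
        σ ^ 2 * ∫ x, emdenFowler σ u x ^ 2 ∂cylinderMeasure E =
      ∫ x, (‖x‖ ^ σ * (‖x‖ * ‖fderiv ℝ u x‖)) ^ 2 ∂cylinderMeasure E := by
  have hv := hu.emdenFowler σ
  have gradient_v := hv.norm_mul_norm_fderiv.pow two_ne_zero
  have sq_v := (hv.pow two_ne_zero).continuous_smul (continuous_const (y := σ ^ 2))
  have gradient_u := (hu.norm_mul_norm_fderiv.norm_rpow_smul σ).pow two_ne_zero
  have radial := (hv.pow two_ne_zero).fderiv_apply_self.continuous_smul (continuous_const (y := σ))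
  have pointwise := (gradient_v.add sq_v).ext_of_forall_ne_zero (gradient_u.add radial)
    fun x hx => hu.sq_norm_fderiv_emdenFowler σ hx
  -- The cross term is a radial derivative, so it has integral zero on the cylinder.
  have integrated := congrArg (fun g => ∫ x, g x ∂cylinderMeasure E) pointwise
  simp only [integral_add gradient_v.integrable_cylinderMeasure sq_v.integrable_cylinderMeasure,
    integral_add gradient_u.integrable_cylinderMeasure radial.integrable_cylinderMeasure,
    integral_smul, (hv.pow two_ne_zero).integral_cylinderMeasure_fderiv_apply_self, smul_zero,
    add_zero] at integrated
  exact integrated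

lemma IsPuncturedTest.cylinderEnergy_emdenFowler_le {u : E → ℝ} (hu : IsPuncturedTest 1 u) {σ : ℝ}
    (hσ : σ ≠ 0) :
    cylinderEnergy (emdenFowler σ u) ≤
      (1 + (σ ^ 2)⁻¹) * ∫ x, (‖x‖ ^ σ * (‖x‖ * ‖fderiv ℝ u x‖)) ^ 2 ∂cylinderMeasure E := by
  rw [(hu.emdenFowler σ).cylinderEnergy_eq_add, ← hu.integral_sq_norm_fderiv_emdenFowler σ]
  set D := ∫ x, (‖x‖ * ‖fderiv ℝ (emdenFowler σ u) x‖) ^ 2 ∂cylinderMeasure E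
  set I := ∫ x, emdenFowler σ u x ^ 2 ∂cylinderMeasure E
  have hD : 0 ≤ D := integral_nonneg fun x => sq_nonneg _
  have hI : 0 ≤ I := integral_nonneg fun x => sq_nonneg _
  calc D + I ≤ D + I + ((σ ^ 2)⁻¹ * D + σ ^ 2 * I) :=
        le_add_of_nonneg_right (add_nonneg (mul_nonneg (by positivity) hD)
          (mul_nonneg (by positivity) hI))
    _ = (1 + (σ ^ 2)⁻¹) * (D + σ ^ 2 * I) := by field_simp; ring

lemma IsPuncturedTest.integral_gradientMajorant_sq_le {v : E → ℝ} (hv : IsPuncturedTest 1 v)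
    (α β : ℝ) :
    ∫ x, gradientMajorant α β v x ^ 2 ∂cylinderMeasure E ≤ (α ^ 2 + β ^ 2) * cylinderEnergy v := by
  have energy_density := (hv.norm_mul_norm_fderiv.pow two_ne_zero).add
    ((hv.pow two_ne_zero).of_le zero_le)
  rw [cylinderEnergy, ← integral_const_mul]
  refine integral_mono ((hv.gradientMajorant α β).pow two_ne_zero).integrable_cylinderMeasure
    (energy_density.integrable_cylinderMeasure.const_mul _) fun x => ?_
  simp only [gradientMajorant, ← sq_abs (v x)]
  linarith [sq_nonneg (α * |v x| - β * (‖x‖ * ‖fderiv ℝ v x‖))]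

lemma IsPuncturedTest.sq_integral_norm_fderiv_norm_rpow_smul_pow_le {v : E → ℝ}
    (hv : IsPuncturedTest 1 v) {m : ℕ} (hm : m ≠ 0) :
    (∫ x, ‖fderiv ℝ (fun y => ‖y‖ ^ (1 - finrank ℝ E : ℝ) • v y ^ (m + 1)) x‖) ^ 2 ≤
      (∫ x, |v x| ^ (2 * m : ℝ) ∂cylinderMeasure E) *
        (((m + 1) ^ 2 + (1 - finrank ℝ E : ℝ) ^ 2) * cylinderEnergy v) := by
  set δ : ℝ := 1 - finrank ℝ E with hδ
  have abs_pow := (hv.comp_continuous continuous_abs abs_zero).pow hm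
  have majorant := hv.gradientMajorant (m + 1) |δ|
  have hw := ((hv.pow m.succ_ne_zero).norm_rpow_smul δ).fderiv.comp_continuous continuous_norm
    norm_zero
  have product := majorant.continuous_smul abs_pow.contDiff.continuous
  have exponent : -(finrank ℝ E : ℝ) = δ - 1 := by rw [hδ]; ring
  have abs_rpow_eq (x : E) : |v x| ^ (2 * m : ℝ) = (|v x| ^ m) ^ 2 := by
    rw [← pow_mul, ← rpow_natCast]
    push_cast
    ring_nf
  calc _ ≤ (∫ x, |v x| ^ m * gradientMajorant (m + 1) |δ| v x ∂cylinderMeasure E) ^ 2 := by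
        gcongr
        rw [integral_cylinderMeasure, exponent]
        refine integral_mono hw.integrable (product.norm_rpow_smul _).integrable
          (hw.le_of_forall_ne_zero (product.norm_rpow_smul _) fun x hx => ?_)
        exact norm_fderiv_norm_rpow_smul_pow_le (hv.contDiff.differentiable one_ne_zero x) hx δ m
    _ ≤ (∫ x, (|v x| ^ m) ^ 2 ∂cylinderMeasure E) *
        ∫ x, gradientMajorant (m + 1) |δ| v x ^ 2 ∂cylinderMeasure E :=
      sq_integral_mul_le (abs_pow.pow two_ne_zero).integrable_cylinderMeasure
        (majorant.pow two_ne_zero).integrable_cylinderMeasure (fun x => by positivity)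
        fun x => by unfold gradientMajorant; positivity
    _ ≤ _ := by
      simp_rw [abs_rpow_eq]
      rw [← sq_abs δ]
      gcongr
      exact hv.integral_gradientMajorant_sq_le _ _

end Cylinder

section CylinderSobolev

variable {E : Type*} [NormedAddCommGroup E] [InnerProductSpace ℝ E] [FiniteDimensional ℝ E]
  [MeasurableSpace E] [BorelSpace E]

variable (E) in
/-- The Sobolev embedding of `H¹` into `L^q` on the cylinder `E \ {0} ≃ ℝ × S^(d-1)`. -/
def CylinderSobolev (q : ℝ) : Prop :=
  ∃ C : ℝ, 0 ≤ C ∧ ∀ v : E → ℝ, IsPuncturedTest 1 v →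
    ∫ x, |v x| ^ q ∂cylinderMeasure E ≤ C * cylinderEnergy v ^ (q / 2)

lemma cylinderSobolev_two : CylinderSobolev E 2 := by
  refine ⟨1, zero_le_one, fun v hv => ?_⟩
  simpa using hv.integral_sq_le_cylinderEnergy

lemma CylinderSobolev.interpolate {q₀ p q₁ : ℝ} (h₀ : CylinderSobolev E q₀)
    (h₁ : CylinderSobolev E q₁) (hq₀ : 0 < q₀) (hp : q₀ ≤ p) (hpq₁ : p ≤ q₁) :
    CylinderSobolev E p := by
  obtain ⟨C₀, hC₀, bound₀⟩ := h₀
  obtain ⟨C₁, hC₁, bound₁⟩ := h₁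
  obtain ⟨s, t, hs, ht, hst, rfl⟩ : p ∈ segment ℝ q₀ q₁ := Icc_subset_segment ⟨hp, hpq₁⟩
  have hq₁ : 0 < q₁ := hq₀.trans_le (hp.trans hpq₁)
  refine ⟨C₀ ^ s * C₁ ^ t, by positivity, fun v hv => ?_⟩
  have hE := cylinderEnergy_nonneg v
  have abs_rpow_eq (x : E) : |v x| ^ (s • q₀ + t • q₁) = (|v x| ^ q₀) ^ s * (|v x| ^ q₁) ^ t := by
    rw [← rpow_mul (abs_nonneg _), ← rpow_mul (abs_nonneg _),
      ← rpow_add_of_nonneg (abs_nonneg _) (by positivity) (by positivity), smul_eq_mul,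
      smul_eq_mul, mul_comm s, mul_comm t]
  calc ∫ x, |v x| ^ (s • q₀ + t • q₁) ∂cylinderMeasure E
      = ∫ x, (|v x| ^ q₀) ^ s * (|v x| ^ q₁) ^ t ∂cylinderMeasure E := by simp_rw [abs_rpow_eq]
    _ ≤ (∫ x, |v x| ^ q₀ ∂cylinderMeasure E) ^ s * (∫ x, |v x| ^ q₁ ∂cylinderMeasure E) ^ t :=
        integral_rpow_mul_rpow_le (hv.abs_rpow hq₀).integrable_cylinderMeasure
          (hv.abs_rpow hq₁).integrable_cylinderMeasure (fun x => by positivity)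
          (fun x => by positivity) hs ht hst
    _ ≤ (C₀ * cylinderEnergy v ^ (q₀ / 2)) ^ s * (C₁ * cylinderEnergy v ^ (q₁ / 2)) ^ t := by
        gcongr
        · exact bound₀ v hv
        · exact bound₁ v hv
    _ = C₀ ^ s * C₁ ^ t * cylinderEnergy v ^ ((s • q₀ + t • q₁) / 2) := by
        rw [mul_rpow hC₀ (by positivity), mul_rpow hC₁ (by positivity), ← rpow_mul hE,
          ← rpow_mul hE, mul_mul_mul_comm, ← rpow_add_of_nonneg hE (by positivity) (by positivity),
          smul_eq_mul, smul_eq_mul]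
        ring_nf

lemma CylinderSobolev.of_sq_le_mul_cylinderEnergy {q p M : ℝ} (hq : CylinderSobolev E q)
    (hq₀ : 0 < q) (hqp : q ≤ p) (hM : 0 ≤ M)
    (sup_bound : ∀ v : E → ℝ, IsPuncturedTest 1 v → ∀ x, v x ^ 2 ≤ M * cylinderEnergy v) :
    CylinderSobolev E p := by
  obtain ⟨C, hC, bound⟩ := hq
  have hr : 0 ≤ (p - q) / 2 := by linarith
  refine ⟨M ^ ((p - q) / 2) * C, by positivity, fun v hv => ?_⟩
  have hE := cylinderEnergy_nonneg v
  have pointwise (x : E) :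
      |v x| ^ p ≤ (M * cylinderEnergy v) ^ ((p - q) / 2) * |v x| ^ q :=
    calc |v x| ^ p = (v x ^ 2) ^ ((p - q) / 2) * |v x| ^ q := by
          rw [← sq_abs, ← rpow_two, ← rpow_mul (abs_nonneg _),
            ← rpow_add_of_nonneg (abs_nonneg _) (by positivity) hq₀.le]
          ring_nf
      _ ≤ _ := by gcongr; exact sup_bound v hv x
  calc ∫ x, |v x| ^ p ∂cylinderMeasure E
      ≤ (M * cylinderEnergy v) ^ ((p - q) / 2) * ∫ x, |v x| ^ q ∂cylinderMeasure E := by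
        rw [← integral_const_mul]
        exact integral_mono (hv.abs_rpow (hq₀.trans_le hqp)).integrable_cylinderMeasure
          ((hv.abs_rpow hq₀).integrable_cylinderMeasure.const_mul _) pointwise
    _ ≤ (M * cylinderEnergy v) ^ ((p - q) / 2) * (C * cylinderEnergy v ^ (q / 2)) := by
        gcongr
        exact bound v hv
    _ = M ^ ((p - q) / 2) * C * cylinderEnergy v ^ (p / 2) := by
        rw [mul_rpow hM hE, mul_mul_mul_comm, ← rpow_add_of_nonneg hE hr (by positivity)]
        ring_nf

lemma IsPuncturedTest.sq_le_mul_cylinderEnergy_of_finrank_eq_one (hd : finrank ℝ E = 1) {v : E → ℝ}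
    (hv : IsPuncturedTest 1 v) (x : E) : v x ^ 2 ≤ 2 * cylinderEnergy v := by
  have hE := cylinderEnergy_nonneg v
  have hw := hv.pow two_ne_zero
  have sup_bound := norm_le_integral_norm_fderiv_of_finrank_eq_one hd hw.contDiff
    hw.hasCompactSupport x
  have gradient_bound : (∫ y, ‖fderiv ℝ (fun y => v y ^ 2) y‖) ^ 2 ≤
      (∫ y, v y ^ 2 ∂cylinderMeasure E) * (4 * cylinderEnergy v) := by
    have := hv.sq_integral_norm_fderiv_norm_rpow_smul_pow_le one_ne_zero
    norm_num [hd] at this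
    exact this
  rw [norm_of_nonneg (sq_nonneg _)] at sup_bound
  refine sup_bound.trans (le_of_sq_le_sq ?_ (by positivity))
  calc _ ≤ _ := gradient_bound
    _ ≤ cylinderEnergy v * (4 * cylinderEnergy v) := by
      gcongr
      exact hv.integral_sq_le_cylinderEnergy
    _ = _ := by ring

lemma cylinderSobolev_of_finrank_eq_one (hd : finrank ℝ E = 1) {p : ℝ} (hp : 2 ≤ p) :
    CylinderSobolev E p :=
  cylinderSobolev_two.of_sq_le_mul_cylinderEnergy two_pos hp two_pos.le
    fun _ hv => hv.sq_le_mul_cylinderEnergy_of_finrank_eq_one hd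

lemma CylinderSobolev.add_two_of_finrank_eq_two (hd : finrank ℝ E = 2) {m : ℕ} (hm : m ≠ 0)
    (h : CylinderSobolev E (2 * m)) : CylinderSobolev E (2 * (m + 1 : ℕ)) := by
  obtain ⟨C, hC, bound⟩ := h
  obtain ⟨S, hS, sobolev⟩ := exists_integral_norm_rpow_le_sobolev (F := ℝ) (volume : Measure E)
    le_rfl two_pos (by simp [hd]) (by norm_num [hd])
  refine ⟨S * (C * ((m + 1) ^ 2 + 1)), by positivity, fun v hv => ?_⟩
  have hE := cylinderEnergy_nonneg v
  have hw := (hv.pow m.succ_ne_zero).norm_rpow_smul (-1)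
  have norm_rpow_eq (x : E) : ‖x‖ ^ (-2 : ℝ) • |v x| ^ (2 * (m + 1 : ℕ) : ℝ) =
      ‖‖x‖ ^ (-1 : ℝ) • v x ^ (m + 1)‖ ^ (2 : ℝ) := by
    rw [norm_norm_rpow_smul_rpow, neg_one_mul, norm_pow, norm_eq_abs, ← rpow_natCast,
      ← rpow_mul (abs_nonneg _), mul_comm 2, smul_eq_mul]
  have gradient_bound : (∫ x, ‖fderiv ℝ (fun y => ‖y‖ ^ (-1 : ℝ) • v y ^ (m + 1)) x‖) ^ 2 ≤
      (∫ x, |v x| ^ (2 * m : ℝ) ∂cylinderMeasure E) *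
        (((m + 1) ^ 2 + 1) * cylinderEnergy v) := by
    have := hv.sq_integral_norm_fderiv_norm_rpow_smul_pow_le hm
    norm_num [hd] at this ⊢
    exact this
  calc ∫ x, |v x| ^ (2 * (m + 1 : ℕ) : ℝ) ∂cylinderMeasure E
      = ∫ x, ‖‖x‖ ^ (-1 : ℝ) • v x ^ (m + 1)‖ ^ (2 : ℝ) := by
        simp_rw [integral_cylinderMeasure, hd, Nat.cast_two, norm_rpow_eq]
    _ ≤ S * (∫ x, ‖fderiv ℝ (fun y => ‖y‖ ^ (-1 : ℝ) • v y ^ (m + 1)) x‖) ^ 2 := by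
        simpa using sobolev _ hw.contDiff hw.hasCompactSupport
    _ ≤ S * (C * cylinderEnergy v ^ (2 * m / 2 : ℝ) * (((m + 1) ^ 2 + 1) * cylinderEnergy v)) := by
        gcongr
        refine gradient_bound.trans ?_
        gcongr
        exact bound v hv
    _ = S * (C * ((m + 1) ^ 2 + 1)) * cylinderEnergy v ^ (2 * (m + 1 : ℕ) / 2 : ℝ) := by
        simp only [mul_div_cancel_left₀ _ (two_ne_zero (α := ℝ)), rpow_natCast]
        ring

lemma cylinderSobolev_of_finrank_eq_two (hd : finrank ℝ E = 2) {p : ℝ} (hp : 2 ≤ p) :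
    CylinderSobolev E p := by
  have even_exponent (m : ℕ) (hm : 1 ≤ m) : CylinderSobolev E (2 * m) := by
    induction m, hm using Nat.le_induction with
    | base => simpa using cylinderSobolev_two
    | succ m hm ih => exact ih.add_two_of_finrank_eq_two hd (Nat.one_le_iff_ne_zero.1 hm)
  obtain ⟨m, hm⟩ := exists_nat_ge p
  have hm₁ : (1 : ℝ) ≤ m := by linarith
  exact cylinderSobolev_two.interpolate (even_exponent m (mod_cast hm₁)) two_pos hp (by linarith)

lemma IsPuncturedTest.integral_sq_norm_fderiv_norm_rpow_smul_le {v : E → ℝ}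
    (hv : IsPuncturedTest 1 v) :
    ∫ x, ‖fderiv ℝ (fun y => ‖y‖ ^ ((2 - finrank ℝ E) / 2 : ℝ) • v y) x‖ ^ 2 ≤
      (1 + ((2 - finrank ℝ E) / 2 : ℝ) ^ 2) * cylinderEnergy v := by
  set δ : ℝ := (2 - finrank ℝ E) / 2 with hδ
  have hw := ((hv.norm_rpow_smul δ).fderiv.comp_continuous continuous_norm norm_zero).pow
    two_ne_zero
  have majorant_sq := (hv.gradientMajorant 1 |δ|).pow two_ne_zero
  have pointwise (x : E) (hx : x ≠ 0) : ‖fderiv ℝ (fun y => ‖y‖ ^ δ • v y) x‖ ^ 2 ≤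
      ‖x‖ ^ (-(finrank ℝ E : ℝ)) • gradientMajorant 1 |δ| v x ^ 2 := by
    have bound := norm_fderiv_norm_rpow_smul_pow_le
      (hv.contDiff.differentiable one_ne_zero x) hx δ 0
    simp only [zero_add, pow_one, pow_zero, one_mul, Nat.cast_zero] at bound
    calc _ ≤ (‖x‖ ^ (δ - 1) * gradientMajorant 1 |δ| v x) ^ 2 := by gcongr
      _ = _ := by
        rw [mul_pow, ← rpow_mul_natCast (norm_nonneg x), smul_eq_mul, hδ]
        ring_nf
  calc _ ≤ ∫ x, gradientMajorant 1 |δ| v x ^ 2 ∂cylinderMeasure E := by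
        rw [integral_cylinderMeasure]
        exact integral_mono hw.integrable (majorant_sq.norm_rpow_smul _).integrable
          (hw.le_of_forall_ne_zero (majorant_sq.norm_rpow_smul _) pointwise)
    _ ≤ _ := by simpa using hv.integral_gradientMajorant_sq_le 1 |δ|

lemma cylinderSobolev_critical (hd : 3 ≤ finrank ℝ E) :
    CylinderSobolev E (2 * finrank ℝ E / (finrank ℝ E - 2)) := by
  set d := (finrank ℝ E : ℝ) with hd_def
  have hd₃ : 3 ≤ d := by rw [hd_def]; exact_mod_cast hd
  have hd₂ : d - 2 ≠ 0 := by linarith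
  set q := 2 * d / (d - 2) with hq_def
  have hq : 0 < q := div_pos (by linarith) (by linarith)
  obtain ⟨S, hS, sobolev⟩ := exists_integral_norm_rpow_le_sobolev (F := ℝ) (volume : Measure E)
    one_le_two hq (by lia) (by rw [← hd_def, hq_def]; field_simp)
  refine ⟨S * (1 + ((2 - d) / 2) ^ 2) ^ (q / 2), by positivity, fun v hv => ?_⟩
  have hw := hv.norm_rpow_smul ((2 - d) / 2)
  have norm_rpow_eq (x : E) :
      ‖x‖ ^ (-d) • |v x| ^ q = ‖‖x‖ ^ ((2 - d) / 2) • v x‖ ^ q := by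
    have exponent : (2 - d) / 2 * q = -d := by
      rw [hq_def]
      field_simp
      ring
    rw [norm_norm_rpow_smul_rpow, exponent, norm_eq_abs, smul_eq_mul]
  calc ∫ x, |v x| ^ q ∂cylinderMeasure E = ∫ x, ‖‖x‖ ^ ((2 - d) / 2) • v x‖ ^ q := by
        simp_rw [integral_cylinderMeasure, ← hd_def, norm_rpow_eq]
    _ ≤ S * (∫ x, ‖fderiv ℝ (fun y => ‖y‖ ^ ((2 - d) / 2) • v y) x‖ ^ 2) ^ (q / 2) := by
        simpa using sobolev _ hw.contDiff hw.hasCompactSupport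
    _ ≤ S * ((1 + ((2 - d) / 2) ^ 2) * cylinderEnergy v) ^ (q / 2) := by
        gcongr
        exact hv.integral_sq_norm_fderiv_norm_rpow_smul_le
    _ = S * (1 + ((2 - d) / 2) ^ 2) ^ (q / 2) * cylinderEnergy v ^ (q / 2) := by
        rw [mul_rpow (by positivity) (cylinderEnergy_nonneg v), mul_assoc]

theorem cylinderSobolev [Nontrivial E] {p : ℝ} (hp : 2 ≤ p)
    (hp_critical : 3 ≤ finrank ℝ E → p ≤ 2 * finrank ℝ E / (finrank ℝ E - 2)) :
    CylinderSobolev E p := by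
  have hd₀ : 0 < finrank ℝ E := finrank_pos
  obtain hd | hd | hd : finrank ℝ E = 1 ∨ finrank ℝ E = 2 ∨ 3 ≤ finrank ℝ E := by lia
  · exact cylinderSobolev_of_finrank_eq_one hd hp
  · exact cylinderSobolev_of_finrank_eq_two hd hp
  · exact cylinderSobolev_two.interpolate (cylinderSobolev_critical hd) two_pos hp (hp_critical hd)

end CylinderSobolev

section CaffarelliKohnNirenberg

variable {E : Type*} [NormedAddCommGroup E] [InnerProductSpace ℝ E] [FiniteDimensional ℝ E]
  [MeasurableSpace E] [BorelSpace E]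

lemma IsPuncturedTest.integral_abs_emdenFowler_rpow {n : WithTop ℕ∞} {u : E → ℝ}
    (hu : IsPuncturedTest n u) (σ : ℝ) {q : ℝ} (hq : 0 < q) :
    ∫ x, |emdenFowler σ u x| ^ q ∂cylinderMeasure E =
      ∫ x, |u x| ^ q * ‖x‖ ^ (σ * q - finrank ℝ E) := by
  rw [integral_cylinderMeasure]
  simp_rw [mul_comm (|u _| ^ q)]
  congr 1
  refine (((hu.emdenFowler σ).abs_rpow hq).norm_rpow_smul _).ext_of_forall_ne_zero
    ((hu.abs_rpow hq).norm_rpow_smul _) fun x hx => ?_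
  have hx₀ : 0 < ‖x‖ := norm_pos_iff.2 hx
  rw [emdenFowler, ← norm_eq_abs, norm_norm_rpow_smul_rpow, norm_eq_abs, smul_eq_mul,
    ← mul_assoc, ← rpow_add hx₀, neg_add_eq_sub]

lemma IsPuncturedTest.integral_sq_norm_rpow_mul_norm_fderiv {u : E → ℝ}
    (hu : IsPuncturedTest 1 u) (σ : ℝ) :
    ∫ x, (‖x‖ ^ σ * (‖x‖ * ‖fderiv ℝ u x‖)) ^ 2 ∂cylinderMeasure E =
      ∫ x, ‖fderiv ℝ u x‖ ^ 2 * ‖x‖ ^ (2 * σ + 2 - finrank ℝ E) := by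
  rw [integral_cylinderMeasure]
  simp_rw [mul_comm (‖fderiv ℝ u _‖ ^ 2)]
  congr 1
  refine (((hu.norm_mul_norm_fderiv.norm_rpow_smul σ).pow two_ne_zero).norm_rpow_smul
    _).ext_of_forall_ne_zero (((hu.fderiv.comp_continuous continuous_norm norm_zero).pow
      two_ne_zero).norm_rpow_smul _) fun x hx => ?_
  have hx₀ : 0 < ‖x‖ := norm_pos_iff.2 hx
  simp only [smul_eq_mul]
  rw [rpow_sub hx₀, rpow_add hx₀, mul_comm 2 σ, rpow_mul hx₀.le, rpow_neg hx₀.le, rpow_two,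
    rpow_two]
  ring

theorem ckn_inequality_general [Nontrivial E] {a b p : ℝ} (ha : a ≠ (finrank ℝ E - 2) / 2)
    (hb : b = a - (finrank ℝ E - 2) / 2 + finrank ℝ E / p) (hp : 2 ≤ p)
    (hp_critical : 3 ≤ finrank ℝ E → p ≤ 2 * finrank ℝ E / (finrank ℝ E - 2)) :
    ∃ C : ℝ, 0 < C ∧ ∀ u : E → ℝ, IsPuncturedTest 1 u →
      (∫ x, |u x| ^ p * ‖x‖ ^ (-(b * p))) ^ (2 / p) ≤
        C * ∫ x, ‖gradient u x‖ ^ 2 * ‖x‖ ^ (-(2 * a)) := by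
  obtain ⟨C, hC, sobolev⟩ := cylinderSobolev hp hp_critical
  set σ : ℝ := (finrank ℝ E - 2) / 2 - a with hσ
  have hσ₀ : σ ≠ 0 := sub_ne_zero.2 ha.symm
  have hp₀ : 0 < p := two_pos.trans_le hp
  refine ⟨(C ^ (2 / p) + 1) * (1 + (σ ^ 2)⁻¹), by positivity, fun u hu => ?_⟩
  have lhs_exponent : -(b * p) = σ * p - finrank ℝ E := by
    rw [hb, hσ]
    field_simp
    ring
  have rhs_exponent : -(2 * a) = 2 * σ + 2 - finrank ℝ E := by rw [hσ]; ring
  have norm_gradient (x : E) : ‖gradient u x‖ = ‖fderiv ℝ u x‖ := by simp [gradient]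
  have hE := cylinderEnergy_nonneg (emdenFowler σ u)
  simp_rw [norm_gradient, lhs_exponent, rhs_exponent]
  rw [← hu.integral_abs_emdenFowler_rpow σ hp₀, ← hu.integral_sq_norm_rpow_mul_norm_fderiv]
  calc (∫ x, |emdenFowler σ u x| ^ p ∂cylinderMeasure E) ^ (2 / p)
      ≤ (C * cylinderEnergy (emdenFowler σ u) ^ (p / 2)) ^ (2 / p) := by
        gcongr
        exact sobolev _ (hu.emdenFowler σ)
    _ = C ^ (2 / p) * cylinderEnergy (emdenFowler σ u) := by
        rw [mul_rpow hC (by positivity), ← rpow_mul hE, div_mul_div_cancel₀' hp₀.ne',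
          div_self two_ne_zero, rpow_one]
    _ ≤ (C ^ (2 / p) + 1) * cylinderEnergy (emdenFowler σ u) := by
        gcongr
        exact le_add_of_nonneg_right zero_le_one
    _ ≤ _ := by
        rw [mul_assoc]
        gcongr
        exact hu.cylinderEnergy_emdenFowler_le hσ₀

end CaffarelliKohnNirenberg

/-- the Caffarelli-Kohn-Nirenberg inequalities. -/
theorem ckn_inequality (d : ℕ) (hd : 1 ≤ d) (a b p : ℝ)
    (hadm : CKNAdmissible d a b p) :
    ∃ C : ℝ, 0 < C ∧ ∀ u : EuclideanSpace ℝ (Fin d) → ℝ, TestAwayFromZero d u →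
      (∫ x, |u x| ^ p * ‖x‖ ^ (-(b * p))) ^ ((2 : ℝ) / p) ≤
        C * ∫ x, ‖gradient u x‖ ^ 2 * ‖x‖ ^ (-(2 * a)) := by
  obtain ⟨hb, hp, hp_critical, ha, -⟩ := hadm
  have : Nonempty (Fin d) := Fin.pos_iff_nonempty.1 hd
  obtain ⟨C, hC, bound⟩ := ckn_inequality_general (E := EuclideanSpace ℝ (Fin d))
    (by simpa using ha.ne) (by simpa using hb) hp (by simpa using hp_critical)
  exact ⟨C, hC, fun u ⟨smooth, compact, zero_notMem⟩ =>
    bound u ⟨smooth.of_le (by exact_mod_cast le_top), compact, zero_notMem⟩⟩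
end
end

section
/- Let d ≥ 1, a_c = (d−2)/2, and let a, b, p satisfy the Caffarelli–Kohn–Nirenberg admissibility conditions (b = a − a_c + d/p; p ∈ [2, 2d/(d−2)] if d ≥ 3, p ∈ [2,∞) if d = 1,2; a < a_c; a ≤ b ≤ a+1 if d ≥ 3, a < b ≤ a+1 if d = 2, a + 1/2 < b ≤ a+1 if d = 1), let C_{a,b} be the smallest constant in the inequality ( ∫ |u|^p |x|^{−bp} dx )^{2/p} ≤ C_{a,b} ∫ |∇u|² |x|^{−2a} dx, and let q = p/(p−1). Then for every smooth function u with compact support in ℝ^d \ {0}, setting v = −Δu + 2a (x/|x|²)·∇u, one has (1/C_{a,b}) ∫_{ℝ^d} |∇u|² |x|^{−2a} dx ≤ ( ∫_{ℝ^d} |v|^q |x|^{−(2a−b)q} dx )^{2/q}. -/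
open MeasureTheory Real
open scoped RealInnerProductSpace

noncomputable section

/-!
Since `|x|^{-2a} L_a u = -div (|x|^{-2a} ∇u)`, integrating by parts away from the origin gives
`∫ |∇u|² |x|^{-2a} = ∫ u (L_a u) |x|^{-2a}`. Write the weight as
`|x|^{-2a} = |x|^{-b} |x|^{-(2a-b)}`; then Hölder's inequality bounds the right-hand side by
`‖|x|^{-b} u‖_p ‖|x|^{-(2a-b)} L_a u‖_q`. By the Caffarelli-Kohn-Nirenberg inequality the first
factor is at most a constant times the square root of the left-hand side, which then cancels.
-/

lemma le_mul_sq_of_le_mul_of_sq_le_mul {D A B C : ℝ} (hC : 0 ≤ C) (hD : 0 ≤ D) (hDAB : D ≤ A * B)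
    (hA : A ^ 2 ≤ C * D) : D ≤ C * B ^ 2 := by
  rcases hD.eq_or_lt with rfl | hDpos
  · positivity
  refine le_of_mul_le_mul_left ?_ hDpos
  calc D * D ≤ (A * B) * (A * B) := mul_self_le_mul_self hD hDAB
    _ = A ^ 2 * B ^ 2 := by ring
    _ ≤ C * D * B ^ 2 := by gcongr
    _ = D * (C * B ^ 2) := by ring

section CompactSupport

variable {X : Type*} [TopologicalSpace X] {φ g : X → ℝ} {U : Set X}

lemma continuous_mul_of_tsupport_subset (hU : IsOpen U) (hφ : Continuous φ)
    (hφU : tsupport φ ⊆ U) (hg : ContinuousOn g U) : Continuous fun x ↦ φ x * g x :=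
  (hφ.continuousOn.mul hg).continuous_of_tsupport_subset hU (tsupport_mul_subset_left.trans hφU)

lemma integrable_mul_of_tsupport_subset [MeasurableSpace X] [OpensMeasurableSpace X]
    {μ : Measure X} [IsFiniteMeasureOnCompacts μ] (hU : IsOpen U) (hφ : Continuous φ)
    (hφc : HasCompactSupport φ) (hφU : tsupport φ ⊆ U) (hg : ContinuousOn g U) :
    Integrable (fun x ↦ φ x * g x) μ :=
  (continuous_mul_of_tsupport_subset hU hφ hφU hg).integrable_of_hasCompactSupport hφc.mul_right

end CompactSupport

section WeightedNorm

variable {E : Type*} [NormedAddCommGroup E]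

lemma continuousOn_norm_rpow (s : ℝ) : ContinuousOn (fun x : E ↦ ‖x‖ ^ s) {0}ᶜ :=
  continuous_norm.continuousOn.rpow_const fun _ hx ↦ .inl (norm_ne_zero_iff.2 hx)

lemma continuous_mul_norm_rpow {f : E → ℝ} (hf : Continuous f) (hf0 : 0 ∉ tsupport f) (s : ℝ) :
    Continuous fun x ↦ f x * ‖x‖ ^ s :=
  continuous_mul_of_tsupport_subset isOpen_compl_singleton hf
    (Set.subset_compl_singleton_iff.2 hf0) (continuousOn_norm_rpow s)

lemma abs_mul_norm_rpow_neg_rpow (c σ r : ℝ) (x : E) :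
    |c * ‖x‖ ^ (-σ)| ^ r = |c| ^ r * ‖x‖ ^ (-(σ * r)) := by
  rw [abs_mul, abs_of_nonneg (by positivity : 0 ≤ ‖x‖ ^ (-σ)),
    mul_rpow (abs_nonneg c) (by positivity), ← rpow_mul (norm_nonneg x), neg_mul]

variable [MeasureSpace E]

/-- The norm of `f` in `L^r(|x|^{-σr} dx)`, that is, the `L^r` norm of `|x|^{-σ} f`. For `r ≠ 0`
it is `0`, like the Bochner integral, when `f` is not in this space. -/
def weightedLpNorm (σ r : ℝ) (f : E → ℝ) : ℝ :=
  (∫ x, |f x| ^ r * ‖x‖ ^ (-(σ * r))) ^ (1 / r)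

lemma sq_weightedLpNorm (σ r : ℝ) (f : E → ℝ) :
    weightedLpNorm σ r f ^ 2 = (∫ x, |f x| ^ r * ‖x‖ ^ (-(σ * r))) ^ (2 / r) := by
  rw [weightedLpNorm, ← rpow_mul_natCast (integral_nonneg fun _ ↦ by positivity)]
  congr 1
  push_cast
  ring

variable [BorelSpace E] [IsFiniteMeasureOnCompacts (volume : Measure E)] {f g : E → ℝ}

lemma weightedLpNorm_pos [(volume : Measure E).IsOpenPosMeasure] {r : ℝ} (hr : 0 < r) (σ : ℝ)
    (hf : Continuous f) (hfc : HasCompactSupport f) (hf0 : 0 ∉ tsupport f) (hne : f ≠ 0) :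
    0 < weightedLpNorm σ r f := by
  obtain ⟨x, hx⟩ := Function.ne_iff.1 hne
  have hx0 : x ≠ 0 := fun h ↦ hf0 (h ▸ subset_tsupport f hx)
  have hcont : Continuous fun y ↦ |f y| ^ r * ‖y‖ ^ (-(σ * r)) := by
    simp only [← abs_mul_norm_rpow_neg_rpow]
    exact (continuous_mul_norm_rpow hf hf0 (-σ)).abs.rpow_const fun _ ↦ .inr hr.le
  have hsupp : HasCompactSupport fun y ↦ |f y| ^ r * ‖y‖ ^ (-(σ * r)) :=
    (hfc.comp_left (g := fun t ↦ |t| ^ r) (by simp [hr.ne'])).mul_right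
  refine rpow_pos_of_pos (hcont.integral_pos_of_hasCompactSupport_nonneg_nonzero hsupp
    (fun _ ↦ by positivity) (x := x) ?_) _
  have : 0 < |f x| := abs_pos.2 hx
  positivity

lemma integral_mul_mul_norm_rpow_le {p q : ℝ} (hpq : p.HolderConjugate q) (σ τ : ℝ)
    (hf : Continuous f) (hfc : HasCompactSupport f) (hf0 : 0 ∉ tsupport f)
    (hg : Continuous g) (hgc : HasCompactSupport g) (hg0 : 0 ∉ tsupport g) :
    ∫ x, f x * g x * ‖x‖ ^ (-(σ + τ)) ≤ weightedLpNorm σ p f * weightedLpNorm τ q g := by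
  have split_weight (x : E) :
      f x * g x * ‖x‖ ^ (-(σ + τ)) = (f x * ‖x‖ ^ (-σ)) * (g x * ‖x‖ ^ (-τ)) := by
    rcases eq_or_ne x 0 with rfl | hx
    · simp [image_eq_zero_of_notMem_tsupport hf0]
    · rw [neg_add, rpow_add (norm_pos_iff.2 hx)]
      ring
  calc ∫ x, f x * g x * ‖x‖ ^ (-(σ + τ))
      ≤ ‖∫ x, (f x * ‖x‖ ^ (-σ)) * (g x * ‖x‖ ^ (-τ))‖ := by
        simp only [split_weight]
        exact le_norm_self _
    _ ≤ ∫ x, ‖f x * ‖x‖ ^ (-σ)‖ * ‖g x * ‖x‖ ^ (-τ)‖ := by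
        simpa only [norm_mul] using
          norm_integral_le_integral_norm fun x ↦ (f x * ‖x‖ ^ (-σ)) * (g x * ‖x‖ ^ (-τ))
    _ ≤ _ := integral_mul_norm_le_Lp_mul_Lq hpq
        ((continuous_mul_norm_rpow hf hf0 (-σ)).memLp_of_hasCompactSupport hfc.mul_right)
        ((continuous_mul_norm_rpow hg hg0 (-τ)).memLp_of_hasCompactSupport hgc.mul_right)
    _ = weightedLpNorm σ p f * weightedLpNorm τ q g := by
        simp only [norm_eq_abs, abs_mul_norm_rpow_neg_rpow, weightedLpNorm]

end WeightedNorm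

lemma integral_mul_fderiv_eq_neg_of_tsupport_subset {E : Type*} [NormedAddCommGroup E]
    [NormedSpace ℝ E] [FiniteDimensional ℝ E] [MeasurableSpace E] [BorelSpace E]
    {μ : Measure E} [μ.IsAddHaarMeasure] {φ g : E → ℝ} {U : Set E} (hU : IsOpen U)
    (hφ : ContDiff ℝ 1 φ) (hφc : HasCompactSupport φ) (hφU : tsupport φ ⊆ U)
    (hg : ContDiffOn ℝ 1 g U) (v : E) :
    ∫ x, φ x * fderiv ℝ g x v ∂μ = -∫ x, fderiv ℝ φ x v * g x ∂μ := by
  have hg' : ContinuousOn (fun x ↦ fderiv ℝ g x v) U :=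
    (hg.continuousOn_fderiv_of_isOpen hU le_rfl).clm_apply continuousOn_const
  have hφ' : Continuous fun x ↦ fderiv ℝ φ x v :=
    (hφ.continuous_fderiv one_ne_zero).clm_apply continuous_const
  exact integral_mul_fderiv_eq_neg_fderiv_mul_of_integrable
    (integrable_mul_of_tsupport_subset hU hφ' (hφc.fderiv_apply ℝ v)
      ((tsupport_fderiv_apply_subset ℝ v).trans hφU) hg.continuousOn)
    (integrable_mul_of_tsupport_subset hU hφ.continuous hφc hφU hg')
    (integrable_mul_of_tsupport_subset hU hφ.continuous hφc hφU hg.continuousOn)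
    (fun x _ ↦ hφ.differentiable one_ne_zero x)
    (fun x hx ↦ (hg.differentiableOn one_ne_zero).differentiableAt (hU.mem_nhds (hφU hx)))

section Green

open Laplacian InnerProductSpace
open scoped Gradient

variable {E : Type*} [NormedAddCommGroup E] [InnerProductSpace ℝ E]

lemma hasGradientAt_norm_rpow [CompleteSpace E] {x : E} (hx : x ≠ 0) (s : ℝ) :
    HasGradientAt (fun y : E ↦ ‖y‖ ^ s) ((s * ‖x‖ ^ (s - 2)) • x) x := by
  have hsq_rpow (t : ℝ) (y : E) : (‖y‖ ^ 2) ^ t = ‖y‖ ^ (2 * t) := by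
    rw [← rpow_natCast_mul (norm_nonneg y), Nat.cast_ofNat]
  have hderiv := (hasStrictFDerivAt_norm_sq x).hasFDerivAt.rpow_const (p := s / 2)
    (.inl (pow_ne_zero 2 (norm_ne_zero_iff.2 hx)))
  simp only [hsq_rpow, mul_div_cancel₀ s two_ne_zero, mul_sub, mul_one] at hderiv
  refine hasGradientAt_iff_hasFDerivAt.2 (hderiv.congr_fderiv ?_)
  ext y
  simp only [smul_apply, coe_innerSL_apply, nsmul_eq_mul, Nat.cast_ofNat, smul_eq_mul, map_smul,
    toDual_apply_apply]
  ring

lemma contDiffOn_norm_rpow {n : WithTop ℕ∞} (s : ℝ) :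
    ContDiffOn ℝ n (fun x : E ↦ ‖x‖ ^ s) {0}ᶜ := fun _ hx ↦
  ((contDiffAt_norm ℝ hx).rpow_const_of_ne (norm_ne_zero_iff.2 hx)).contDiffWithinAt

variable [FiniteDimensional ℝ E]

lemma inner_gradient_gradient_eq_sum {ι : Type*} [Fintype ι] (e : OrthonormalBasis ι ℝ E)
    (f g : E → ℝ) (x : E) :
    ⟪∇ f x, ∇ g x⟫ = ∑ i, fderiv ℝ f x (e i) * fderiv ℝ g x (e i) := by
  rw [← e.sum_inner_mul_inner]
  simp only [inner_gradient_left, inner_gradient_right, conj_trivial]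

lemma laplacian_mul_add_inner_gradient_eq_sum {ι : Type*} [Fintype ι] (e : OrthonormalBasis ι ℝ E)
    {u w : E → ℝ} {x : E} (hu : ContDiffAt ℝ 2 u x) (hw : DifferentiableAt ℝ w x) :
    Δ u x * w x + ⟪∇ u x, ∇ w x⟫ =
      ∑ i, fderiv ℝ (fun y ↦ fderiv ℝ u y (e i) * w y) x (e i) := by
  have hu' : DifferentiableAt ℝ (fderiv ℝ u) x :=
    (hu.fderiv_right (m := 1) le_rfl).differentiableAt one_ne_zero
  rw [laplacian_eq_iteratedFDeriv_orthonormalBasis u e, inner_gradient_gradient_eq_sum e,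
    Finset.sum_mul, ← Finset.sum_add_distrib]
  refine Finset.sum_congr rfl fun i _ ↦ ?_
  have hsecond : fderiv ℝ (fun y ↦ fderiv ℝ u y (e i)) x (e i) =
      iteratedFDeriv ℝ 2 u x ![e i, e i] := by
    rw [iteratedFDeriv_two_apply, fderiv_clm_apply hu' (differentiableAt_const _)]
    simp
  rw [fderiv_fun_mul (by fun_prop) hw]
  simp only [add_apply, smul_apply, smul_eq_mul, hsecond]
  ring

variable [MeasurableSpace E] [BorelSpace E] {μ : Measure E} [μ.IsAddHaarMeasure]

theorem integral_inner_gradient_gradient_mul {φ u w : E → ℝ} {U : Set E} (hU : IsOpen U)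
    (hφ : ContDiff ℝ 1 φ) (hφc : HasCompactSupport φ) (hφU : tsupport φ ⊆ U)
    (hu : ContDiffOn ℝ 2 u U) (hw : ContDiffOn ℝ 1 w U) :
    ∫ x, ⟪∇ φ x, ∇ u x⟫ * w x ∂μ = -∫ x, φ x * (Δ u x * w x + ⟪∇ u x, ∇ w x⟫) ∂μ := by
  let e := stdOrthonormalBasis ℝ E
  let flux (i) (x : E) : ℝ := fderiv ℝ u x (e i) * w x
  have hflux (i) : ContDiffOn ℝ 1 (flux i) U :=
    ((hu.fderiv_of_isOpen hU le_rfl).clm_apply contDiffOn_const).mul hw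
  have hφ' (i) : Continuous fun x ↦ fderiv ℝ φ x (e i) :=
    (hφ.continuous_fderiv one_ne_zero).clm_apply continuous_const
  have hdiv (x : E) : φ x * (Δ u x * w x + ⟪∇ u x, ∇ w x⟫) =
      ∑ i, φ x * fderiv ℝ (flux i) x (e i) := by
    rw [← Finset.mul_sum]
    by_cases hx : x ∈ tsupport φ
    · have hxU := hU.mem_nhds (hφU hx)
      rw [laplacian_mul_add_inner_gradient_eq_sum e (hu.contDiffAt hxU)
        ((hw.contDiffAt hxU).differentiableAt one_ne_zero)]
    · simp [image_eq_zero_of_notMem_tsupport hx]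
  have hgrad (x : E) : ⟪∇ φ x, ∇ u x⟫ * w x = ∑ i, fderiv ℝ φ x (e i) * flux i x := by
    simp only [inner_gradient_gradient_eq_sum e, Finset.sum_mul, flux, mul_assoc]
  simp only [hdiv, hgrad]
  rw [integral_finsetSum, integral_finsetSum, ← Finset.sum_neg_distrib]
  · refine Finset.sum_congr rfl fun i _ ↦ ?_
    rw [integral_mul_fderiv_eq_neg_of_tsupport_subset hU hφ hφc hφU (hflux i), neg_neg]
  · exact fun i _ ↦ integrable_mul_of_tsupport_subset hU hφ.continuous hφc hφU
      (((hflux i).continuousOn_fderiv_of_isOpen hU le_rfl).clm_apply continuousOn_const)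
  · exact fun i _ ↦ integrable_mul_of_tsupport_subset hU (hφ' i) (hφc.fderiv_apply ℝ (e i))
      ((tsupport_fderiv_apply_subset ℝ (e i)).trans hφU) (hflux i).continuousOn

end Green

section CaffarelliKohnNirenberg

open Laplacian InnerProductSpace
open scoped Gradient

variable {d : ℕ} {u : EuclideanSpace ℝ (Fin d) → ℝ}

lemma lap_eq_laplacian (u : EuclideanSpace ℝ (Fin d) → ℝ) : lap d u = Δ u := by
  rw [laplacian_eq_iteratedFDeriv_orthonormalBasis u (EuclideanSpace.basisFun (Fin d) ℝ)]
  simp only [EuclideanSpace.basisFun_apply]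
  rfl

lemma opLa_mul_norm_rpow (a : ℝ) (u : EuclideanSpace ℝ (Fin d) → ℝ)
    {x : EuclideanSpace ℝ (Fin d)} (hx : x ≠ 0) :
    opLa d a u x * ‖x‖ ^ (-(2 * a)) =
      -(Δ u x * ‖x‖ ^ (-(2 * a)) + ⟪∇ u x, ∇ (fun y ↦ ‖y‖ ^ (-(2 * a))) x⟫) := by
  have hx' : 0 < ‖x‖ := norm_pos_iff.2 hx
  rw [(hasGradientAt_norm_rpow hx _).gradient, real_inner_smul_right, real_inner_comm, opLa,
    lap_eq_laplacian, rpow_sub hx', rpow_two]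
  ring

lemma tsupport_opLa_subset (a : ℝ) (u : EuclideanSpace ℝ (Fin d) → ℝ) :
    tsupport (opLa d a u) ⊆ tsupport u := by
  refine closure_minimal (fun x hx ↦ ?_) (isClosed_tsupport u)
  by_contra hxu
  have hfderiv : fderiv ℝ u x = 0 :=
    Function.notMem_support.1 fun h ↦ hxu (support_fderiv_subset ℝ h)
  have hhess : iteratedFDeriv ℝ 2 u x = 0 :=
    Function.notMem_support.1 fun h ↦ hxu (support_iteratedFDeriv_subset 2 h)
  exact hx (by simp [opLa, lap, hfderiv, hhess])

lemma continuous_opLa (a : ℝ) (hu : ContDiff ℝ 2 u) (hu0 : 0 ∉ tsupport u) :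
    Continuous (opLa d a u) := by
  have hlap : Continuous (lap d u) := by
    refine continuous_finsetSum _ fun i _ ↦ ?_
    have := hu.continuous_iteratedFDeriv (m := 2) le_rfl
    fun_prop
  have hgrad : Continuous (∇ u) :=
    (toDual ℝ _).symm.continuous.comp (hu.continuous_fderiv two_ne_zero)
  have hcont : ContinuousOn (opLa d a u) {0}ᶜ := by
    refine hlap.neg.continuousOn.add (ContinuousOn.div (by fun_prop) (by fun_prop) ?_)
    simp
  exact hcont.continuous_of_tsupport_subset isOpen_compl_singleton
    ((tsupport_opLa_subset a u).trans (Set.subset_compl_singleton_iff.2 hu0))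

/-- The Dirichlet form `∫ |∇u|² |x|^{-2a} dx` of the operator `L_a`, on the diagonal. -/
def dirichletEnergy (a : ℝ) (u : EuclideanSpace ℝ (Fin d) → ℝ) : ℝ :=
  ∫ x, ‖∇ u x‖ ^ 2 * ‖x‖ ^ (-(2 * a))

lemma dirichletEnergy_nonneg (a : ℝ) (u : EuclideanSpace ℝ (Fin d) → ℝ) :
    0 ≤ dirichletEnergy a u :=
  integral_nonneg fun _ ↦ by positivity

theorem dirichletEnergy_eq_integral_mul_opLa (a : ℝ) (hu : ContDiff ℝ 2 u)
    (huc : HasCompactSupport u) (hu0 : 0 ∉ tsupport u) :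
    dirichletEnergy a u = ∫ x, u x * opLa d a u x * ‖x‖ ^ (-(2 * a)) := by
  have hgreen := integral_inner_gradient_gradient_mul (μ := volume) isOpen_compl_singleton
    (hu.of_le one_le_two) huc (Set.subset_compl_singleton_iff.2 hu0) hu.contDiffOn
    (contDiffOn_norm_rpow (-(2 * a)))
  simp only [real_inner_self_eq_norm_sq] at hgreen
  rw [dirichletEnergy, hgreen, ← integral_neg]
  congr 1 with x
  rcases eq_or_ne x 0 with rfl | hx
  · simp [image_eq_zero_of_notMem_tsupport hu0]
  · rw [mul_assoc, opLa_mul_norm_rpow a u hx, mul_neg]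

theorem dirichletEnergy_le_weightedLpNorm_mul {p q : ℝ} (hpq : p.HolderConjugate q) (a b : ℝ)
    (hu : ContDiff ℝ 2 u) (huc : HasCompactSupport u) (hu0 : 0 ∉ tsupport u) :
    dirichletEnergy a u ≤ weightedLpNorm b p u * weightedLpNorm (2 * a - b) q (opLa d a u) := by
  have hsub := tsupport_opLa_subset a u
  rw [dirichletEnergy_eq_integral_mul_opLa a hu huc hu0]
  simpa only [add_sub_cancel] using integral_mul_mul_norm_rpow_le hpq b (2 * a - b)
    hu.continuous huc hu0 (continuous_opLa a hu hu0)
    (huc.of_isClosed_subset (isClosed_tsupport _) hsub) fun h ↦ hu0 (hsub h)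

lemma exists_testAwayFromZero_ne_zero (hd : 1 ≤ d) :
    ∃ u : EuclideanSpace ℝ (Fin d) → ℝ, TestAwayFromZero d u ∧ u ≠ 0 := by
  have : Nonempty (Fin d) := ⟨⟨0, hd⟩⟩
  obtain ⟨x, hx⟩ := exists_ne (0 : EuclideanSpace ℝ (Fin d))
  obtain ⟨u, hsub, hcomp, hsmooth, -, hux⟩ :=
    exists_contDiff_tsupport_subset (n := ⊤) (isOpen_compl_singleton.mem_nhds hx)
  exact ⟨u, ⟨hsmooth, hcomp, fun h ↦ hsub h rfl⟩, fun h ↦ by simp [h] at hux⟩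

lemma ckn_constant_pos (hd : 1 ≤ d) {a b p C : ℝ} (hp : 0 < p)
    (hC : ∀ u : EuclideanSpace ℝ (Fin d) → ℝ, TestAwayFromZero d u →
      weightedLpNorm b p u ^ 2 ≤ C * dirichletEnergy a u) : 0 < C := by
  obtain ⟨u, hu, hne⟩ := exists_testAwayFromZero_ne_zero hd
  have hnorm := weightedLpNorm_pos hp b hu.1.continuous hu.2.1 hu.2.2 hne
  exact pos_of_mul_pos_left ((pow_pos hnorm 2).trans_le (hC u hu)) (dirichletEnergy_nonneg a u)

theorem ckn_dual_general {a b p q C : ℝ} (hpq : p.HolderConjugate q) (hC : 0 < C)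
    (hu : ContDiff ℝ 2 u) (huc : HasCompactSupport u) (hu0 : 0 ∉ tsupport u)
    (hckn : weightedLpNorm b p u ^ 2 ≤ C * dirichletEnergy a u) :
    1 / C * dirichletEnergy a u ≤ weightedLpNorm (2 * a - b) q (opLa d a u) ^ 2 := by
  rw [one_div, inv_mul_le_iff₀ hC]
  exact le_mul_sq_of_le_mul_of_sq_le_mul hC.le (dirichletEnergy_nonneg a u)
    (dirichletEnergy_le_weightedLpNorm_mul hpq a b hu huc hu0) hckn

end CaffarelliKohnNirenberg

/-- the dual (Hardy-Littlewood-Sobolev type) form of the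
Caffarelli-Kohn-Nirenberg inequality, with `v = L_a u` and `q = p/(p−1)`. -/
theorem ckn_dual (d : ℕ) (hd : 1 ≤ d) (a b p : ℝ) (hadm : CKNAdmissible d a b p)
    (Cab : ℝ)
    (hCab : IsLeast {C : ℝ | ∀ u : EuclideanSpace ℝ (Fin d) → ℝ, TestAwayFromZero d u →
      (∫ x, |u x| ^ p * ‖x‖ ^ (-(b * p))) ^ ((2 : ℝ) / p) ≤
        C * ∫ x, ‖gradient u x‖ ^ 2 * ‖x‖ ^ (-(2 * a))} Cab) :
    ∀ u : EuclideanSpace ℝ (Fin d) → ℝ, TestAwayFromZero d u →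
      1 / Cab * (∫ x, ‖gradient u x‖ ^ 2 * ‖x‖ ^ (-(2 * a))) ≤
        (∫ x, |opLa d a u x| ^ (p / (p - 1)) *
            ‖x‖ ^ (-((2 * a - b) * (p / (p - 1))))) ^ ((2 : ℝ) / (p / (p - 1))) := by
  intro u hu
  have hpq : p.HolderConjugate (p / (p - 1)) := .conjExponent (by linarith [hadm.2.1])
  have hckn : ∀ u : EuclideanSpace ℝ (Fin d) → ℝ, TestAwayFromZero d u →
      weightedLpNorm b p u ^ 2 ≤ Cab * dirichletEnergy a u := fun u hu ↦
    (sq_weightedLpNorm b p u).trans_le (hCab.1 u hu)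
  rw [← sq_weightedLpNorm]
  exact ckn_dual_general hpq (ckn_constant_pos hd hpq.pos hckn) (contDiff_infty.1 hu.1 2)
    hu.2.1 hu.2.2 (hckn u hu)
end
end
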